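/- Every quantitative two-player reachability game has a finite-memory secure equilibrium. -/

import Mathlib

/-- A quantitative multiplayer reachability game: a finite directed graph whose
vertex set is partitioned among the players (via `owner`), with an initial vertex `v0`,
an edge relation `E` such that every vertex has an outgoing edge, and a goal set
`goal i` for each player `i`. -/
structure ReachGame (P : Type) (V : Type) where
  owner : V → P
  v0 : V
  E : V → V → Prop
  total : ∀ v : V, ∃ w : V, E v w
  goal : P → Set V

namespace ReachGame

variable {P V : Type} [DecidableEq P] (G : ReachGame P V)

/-- The last vertex of a history (with default `v0`). -/
def lastV (h : List V) : V := h.getLastD G.v0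

/-- A history: a nonempty finite path in the graph starting at `v0`. -/
def IsHistory (h : List V) : Prop :=
  h ≠ [] ∧ h.head? = some G.v0 ∧ List.Chain' G.E h

/-- A play: an infinite path starting at `v0`. -/
def IsPlay (ρ : ℕ → V) : Prop :=
  ρ 0 = G.v0 ∧ ∀ k : ℕ, G.E (ρ k) (ρ (k + 1))

/-- `σ` is a (total encoding of a) strategy of player `i`: on every history ending in
a vertex owned by `i` it chooses a successor along an edge. -/
def IsStrategy (i : P) (σ : List V → V) : Prop :=
  ∀ h : List V, G.IsHistory h → G.owner (G.lastV h) = i → G.E (G.lastV h) (σ h)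

/-- A strategy profile: one strategy per player. -/
def IsProfile (prof : P → List V → V) : Prop :=
  ∀ i : P, G.IsStrategy i (prof i)

/-- The history of length `n` (i.e. with `n` edges) obtained by letting the players
follow the profile `prof` from `v0`. -/
def outHist (prof : P → List V → V) : ℕ → List V
  | 0 => [G.v0]
  | n + 1 => outHist prof n ++ [prof (G.owner (G.lastV (outHist prof n))) (outHist prof n)]

/-- The outcome play of the strategy profile `prof`. -/
def outcome (prof : P → List V → V) (n : ℕ) : V :=
  G.lastV (G.outHist prof n)

/-- The cost of player `i` for the play `ρ`: the least `l` with `ρ l ∈ goal i`,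
and `⊤` (`+∞`) if there is no such `l`. -/
noncomputable def cost (i : P) (ρ : ℕ → V) : ℕ∞ :=
  sInf {n : ℕ∞ | ∃ l : ℕ, n = (l : ℕ∞) ∧ ρ l ∈ G.goal i}

/-- Nash equilibrium: no player can strictly decrease his cost by a unilateral
deviation. -/
def IsNash (prof : P → List V → V) : Prop :=
  ∀ (j : P) (σ' : List V → V), G.IsStrategy j σ' →
    G.cost j (G.outcome prof) ≤ G.cost j (G.outcome (Function.update prof j σ'))

/-- `h ≈_σ h'` : the strategy `σ` of player `i` behaves the same after `h` and `h'`,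
i.e. `σ (h ++ δ) = σ (h' ++ δ)` for every suffix `δ` making both `h ++ δ` and
`h' ++ δ` histories ending in a vertex of player `i`. -/
def MemEq (i : P) (σ : List V → V) (h h' : List V) : Prop :=
  ∀ δ : List V,
    G.IsHistory (h ++ δ) → G.owner (G.lastV (h ++ δ)) = i →
    G.IsHistory (h' ++ δ) → G.owner (G.lastV (h' ++ δ)) = i →
    σ (h ++ δ) = σ (h' ++ δ)

/-- A strategy of player `i` is finite-memory if the relation `≈_σ` has finitely many
equivalence classes on histories, i.e. there is a finite set of histories meeting
every class. -/
def FiniteMemory (i : P) (σ : List V → V) : Prop :=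
  ∃ S : Finset (List V), ∀ h : List V, G.IsHistory h →
    ∃ h' ∈ S, G.IsHistory h' ∧ G.MemEq i σ h h'

/-- A profile is finite-memory if each of its strategies is. -/
def FiniteMemoryProfile (prof : P → List V → V) : Prop :=
  ∀ i : P, G.FiniteMemory i (prof i)

/-- `Visit h`: the set of players whose goal set is visited by the finite path `h`. -/
def visitL (h : List V) : Set P := {i : P | ∃ v ∈ h, v ∈ G.goal i}

/-- The type of a strategy profile: the set of players whose goal set is visited by
the outcome. -/
def typeOf (prof : P → List V → V) : Set P :=
  {i : P | ∃ l : ℕ, G.outcome prof l ∈ G.goal i}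

/-! ### The truncated game `G^d` -/

/-- A strategy of player `i` in the truncated game `G^d` : it chooses a successor on
every history with less than `d` edges (list length `≤ d`) ending in a vertex of `i`. -/
def IsStrategyTrunc (d : ℕ) (i : P) (σ : List V → V) : Prop :=
  ∀ h : List V, G.IsHistory h → h.length ≤ d → G.owner (G.lastV h) = i →
    G.E (G.lastV h) (σ h)

/-- A strategy profile of the truncated game `G^d`. -/
def IsProfileTrunc (d : ℕ) (prof : P → List V → V) : Prop :=
  ∀ i : P, G.IsStrategyTrunc d i (prof i)

/-- The cost of player `i` for a finite play `h` (a list of vertices): the least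
position of `h` lying in `goal i`, and `⊤` if `goal i` is not visited. -/
noncomputable def costList (i : P) (h : List V) : ℕ∞ :=
  sInf {n : ℕ∞ | ∃ l : ℕ, n = (l : ℕ∞) ∧ l < h.length ∧ h.getD l G.v0 ∈ G.goal i}

/-- Nash equilibrium of the truncated game `G^d` (whose plays are the histories with
exactly `d` edges). -/
def IsNashTrunc (d : ℕ) (prof : P → List V → V) : Prop :=
  ∀ (j : P) (σ' : List V → V), G.IsStrategyTrunc d j σ' →
    G.costList j (G.outHist prof d) ≤
      G.costList j (G.outHist (Function.update prof j σ') d)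

/-- The type of a strategy profile of the truncated game `G^d`. -/
def typeOfTrunc (d : ℕ) (prof : P → List V → V) : Set P :=
  G.visitL (G.outHist prof d)

end ReachGame

/-- `(x₁,x₂) ≺₁ (y₁,y₂)` iff `x₁ > y₁`, or `x₁ = y₁` and `x₂ < y₂` :
player 1 prefers the cost profile `y` to `x`. -/
def prec1 (x y : ℕ∞ × ℕ∞) : Prop := y.1 < x.1 ∨ (x.1 = y.1 ∧ x.2 < y.2)

/-- `(x₁,x₂) ≺₂ (y₁,y₂)` iff `x₂ > y₂`, or `x₂ = y₂` and `x₁ < y₁` :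
player 2 prefers the cost profile `y` to `x`. -/
def prec2 (x y : ℕ∞ × ℕ∞) : Prop := y.2 < x.2 ∨ (x.2 = y.2 ∧ x.1 < y.1)

namespace ReachGame

variable {V : Type} (G : ReachGame (Fin 2) V)

/-- The pair of costs of the two players for the play `ρ`. -/
noncomputable def costPair (ρ : ℕ → V) : ℕ∞ × ℕ∞ := (G.cost 0 ρ, G.cost 1 ρ)

/-- Secure equilibrium: no player `j` has a `≺ⱼ`-profitable deviation. -/
def IsSecure (prof : Fin 2 → List V → V) : Prop :=
  (∀ σ' : List V → V, G.IsStrategy 0 σ' →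
    ¬ prec1 (G.costPair (G.outcome prof))
        (G.costPair (G.outcome (Function.update prof 0 σ')))) ∧
  (∀ σ' : List V → V, G.IsStrategy 1 σ' →
    ¬ prec2 (G.costPair (G.outcome prof))
        (G.costPair (G.outcome (Function.update prof 1 σ'))))

/-- The pair of costs of the two players for a finite play `h`. -/
noncomputable def costListPair (h : List V) : ℕ∞ × ℕ∞ := (G.costList 0 h, G.costList 1 h)

/-- Secure equilibrium of the truncated game `G^d`. -/
def IsSecureTrunc (d : ℕ) (prof : Fin 2 → List V → V) : Prop :=
  (∀ σ' : List V → V, G.IsStrategyTrunc d 0 σ' →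
    ¬ prec1 (G.costListPair (G.outHist prof d))
        (G.costListPair (G.outHist (Function.update prof 0 σ') d))) ∧
  (∀ σ' : List V → V, G.IsStrategyTrunc d 1 σ' →
    ¬ prec2 (G.costListPair (G.outHist prof d))
        (G.costListPair (G.outHist (Function.update prof 1 σ') d)))

end ReachGame


open Filter Topology

/-- Discounted zero-sum games on a finite state space have a value and a positional
optimal choice function. -/
theorem disc_value {V S : Type} [Finite V] [Finite S] (E : S → V → Prop)
    (tot : ∀ s, ∃ w, E s w) (nx : S → V → S) (own : S → Prop) (r : S → ℝ) :
    ∃ (val : S → ℝ) (c : S → V), ∀ s, E s (c s) ∧ val s = r s + val (nx s (c s)) / 2 ∧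
      (own s → ∀ w, E s w → r s + val (nx s w) / 2 ≤ val s) ∧
      (¬ own s → ∀ w, E s w → val s ≤ r s + val (nx s w) / 2) := by
  classical
  have := Fintype.ofFinite V
  have := Fintype.ofFinite S
  let su : S → Finset V := fun s => Finset.univ.filter (E s)
  have hsu : ∀ s, (su s).Nonempty := by
    intro s
    obtain ⟨w, hw⟩ := tot s
    exact ⟨w, by simp [su, hw]⟩
  have memsu : ∀ s w, w ∈ su s ↔ E s w := by intro s w; simp [su]
  let T : (S → ℝ) → (S → ℝ) := fun f s =>
    r s + (if own s then (su s).sup' (hsu s) (fun w => f (nx s w))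
      else (su s).inf' (hsu s) (fun w => f (nx s w))) / 2
  have key : ∀ f g : S → ℝ, ∀ s, T f s ≤ T g s + dist f g / 2 := by
    intro f g s
    have hp : ∀ a, f a ≤ g a + dist f g := by
      intro a
      have h1 := dist_le_pi_dist f g a
      rw [Real.dist_eq] at h1
      linarith [le_abs_self (f a - g a)]
    simp only [T]
    split_ifs with ho
    · have : (su s).sup' (hsu s) (fun w => f (nx s w)) ≤
          (su s).sup' (hsu s) (fun w => g (nx s w)) + dist f g := by
        apply Finset.sup'_le
        intro w hw
        have := Finset.le_sup' (fun w => g (nx s w)) hw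
        linarith [hp (nx s w)]
      linarith
    · have : (su s).inf' (hsu s) (fun w => f (nx s w)) - dist f g ≤
          (su s).inf' (hsu s) (fun w => g (nx s w)) := by
        apply Finset.le_inf'
        intro w hw
        have := Finset.inf'_le (fun w => f (nx s w)) hw
        linarith [hp (nx s w)]
      linarith
  have hT : ContractingWith (1/2 : NNReal) T := by
    refine ⟨by rw [← NNReal.coe_lt_coe]; norm_num, LipschitzWith.of_dist_le_mul ?_⟩
    intro f g
    have h0 : (0:ℝ) ≤ dist f g := dist_nonneg
    rw [dist_pi_le_iff (by positivity)]
    intro s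
    rw [Real.dist_eq, abs_le]
    have h1 := key f g s
    have h2 := key g f s
    rw [dist_comm g f] at h2
    push_cast
    constructor <;> linarith
  obtain ⟨val, hval⟩ : ∃ val, T val = val := ⟨_, hT.fixedPoint_isFixedPt⟩
  have hv : ∀ s, val s = r s + (if own s then (su s).sup' (hsu s) (fun w => val (nx s w))
      else (su s).inf' (hsu s) (fun w => val (nx s w))) / 2 := fun s => (congrFun hval s).symm
  have hc : ∀ s, ∃ w, E s w ∧ val s = r s + val (nx s w) / 2 := by
    intro s
    by_cases ho : own s
    · obtain ⟨w, hw, he⟩ := Finset.exists_mem_eq_sup' (hsu s) (fun w => val (nx s w))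
      refine ⟨w, (memsu s w).1 hw, ?_⟩
      rw [hv s, if_pos ho, he]
    · obtain ⟨w, hw, he⟩ := Finset.exists_mem_eq_inf' (hsu s) (fun w => val (nx s w))
      refine ⟨w, (memsu s w).1 hw, ?_⟩
      rw [hv s, if_neg ho, he]
  choose c hcE hcv using hc
  refine ⟨val, c, fun s => ⟨hcE s, hcv s, ?_, ?_⟩⟩
  · intro ho w hw
    have := Finset.le_sup' (fun w => val (nx s w)) ((memsu s w).2 hw)
    rw [hv s, if_pos ho]
    linarith
  · intro ho w hw
    have := Finset.inf'_le (fun w => val (nx s w)) ((memsu s w).2 hw)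
    rw [hv s, if_neg ho]
    linarith

namespace ReachGame

variable {V : Type} (G : ReachGame (Fin 2) V)

/-- Arena states: current vertex, and the goals visited strictly before. -/
abbrev St (V : Type) := V × (Fin 2 → Prop)

def nx (s : St V) (w : V) : St V := (w, fun i => s.2 i ∨ s.1 ∈ G.goal i)

open Classical in
/-- Memory update. -/
noncomputable def stepM (c : Fin 2 → St V → V) (m : St V × Option (Fin 2)) (w : V) :
    St V × Option (Fin 2) :=
  (G.nx m.1 w, if m.2 = none then
    (if w = c (G.owner m.1.1) m.1 then none else some (G.owner m.1.1)) else m.2)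

def initM : St V × Option (Fin 2) := ((G.v0, fun _ => False), none)

noncomputable def memM (c : Fin 2 → St V → V) (h : List V) : St V × Option (Fin 2) :=
  h.tail.foldl (G.stepM c) G.initM

def choiceM (c : Fin 2 → St V → V) (m : St V × Option (Fin 2)) : V :=
  c (m.2.getD (G.owner m.1.1)) m.1

noncomputable def profM (c : Fin 2 → St V → V) : Fin 2 → List V → V :=
  fun _ h => G.choiceM c (G.memM c h)

theorem memM_append (c : Fin 2 → St V → V) (h δ : List V) (hh : h ≠ []) :
    G.memM c (h ++ δ) = δ.foldl (G.stepM c) (G.memM c h) := by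
  cases h with
  | nil => exact absurd rfl hh
  | cons a l => simp [memM, List.foldl_append]

theorem memM_last (c : Fin 2 → St V → V) (h : List V) (hh : G.IsHistory h) :
    (G.memM c h).1.1 = G.lastV h := by
  obtain ⟨h1, h2, -⟩ := hh
  induction h using List.reverseRecOn with
  | nil => exact absurd rfl h1
  | append_singleton l a _ =>
    by_cases hl : l = []
    · subst hl
      simp at h2
      simp [memM, initM, lastV, h2]
    · rw [memM_append G c l [a] hl]
      simp [stepM, nx, lastV]

theorem finiteMemory_profM [Finite V] (c : Fin 2 → St V → V) (i : Fin 2) :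
    G.FiniteMemory i (G.profM c i) := by
  classical
  have := Fintype.ofFinite (St V × Option (Fin 2))
  let rep : St V × Option (Fin 2) → List V := fun m =>
    if hm : ∃ h, G.IsHistory h ∧ G.memM c h = m then hm.choose else []
  refine ⟨Finset.univ.image rep, fun h hh => ?_⟩
  have hm : ∃ h', G.IsHistory h' ∧ G.memM c h' = G.memM c h := ⟨h, hh, rfl⟩
  have hr : rep (G.memM c h) = hm.choose := dif_pos hm
  have hs := hm.choose_spec
  rw [← hr] at hs
  refine ⟨rep (G.memM c h), by simp, hs.1, ?_⟩
  intro δ _ _ _ _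
  simp only [profM]
  rw [memM_append G c _ _ hh.1, memM_append G c _ _ hs.1.1, hs.2]

theorem isProfile_profM (c : Fin 2 → St V → V) (hc : ∀ i s, G.E s.1 (c i s)) :
    G.IsProfile (G.profM c) := by
  intro i h hh _
  rw [← memM_last G c h hh]
  exact hc _ _

theorem outHist_ne (prof : Fin 2 → List V → V) (n : ℕ) : G.outHist prof n ≠ [] := by
  cases n <;> simp [outHist]

theorem outHist_isHistory (prof : Fin 2 → List V → V) (hp : G.IsProfile prof) (n : ℕ) :
    G.IsHistory (G.outHist prof n) := by
  induction n with
  | zero => exact ⟨by simp [outHist], by simp [outHist], by simp [outHist, List.Chain']⟩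
  | succ n ih =>
    have hE := hp _ _ ih rfl
    obtain ⟨h1, h2, h3⟩ := ih
    refine ⟨G.outHist_ne _ _, ?_, ?_⟩
    · simp only [outHist]
      rw [List.head?_append, h2]; rfl
    · simp only [outHist]
      have h3' : List.IsChain G.E (G.outHist prof n) := h3
      show List.IsChain G.E _
      rw [List.isChain_append]
      refine ⟨h3', by simp, ?_⟩
      intro x hx y hy
      simp at hy
      subst hy
      have : G.lastV (G.outHist prof n) = x := by
        simp [lastV, List.getLastD_eq_getLast?, Option.mem_def.1 hx]
      rw [this] at hE ⊢
      exact hE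

theorem outcome_succ (prof : Fin 2 → List V → V) (n : ℕ) :
    G.outcome prof (n + 1) = prof (G.owner (G.outcome prof n)) (G.outHist prof n) := by
  simp [outcome, outHist, lastV]

/-- The memory state along the outcome. -/
noncomputable def tr (c : Fin 2 → St V → V) (prof : Fin 2 → List V → V) (n : ℕ) :
    St V × Option (Fin 2) := G.memM c (G.outHist prof n)

theorem tr_zero (c : Fin 2 → St V → V) (prof : Fin 2 → List V → V) :
    G.tr c prof 0 = G.initM := by
  simp [tr, outHist, memM]

theorem tr_succ (c : Fin 2 → St V → V) (prof : Fin 2 → List V → V) (n : ℕ) :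
    G.tr c prof (n + 1) = G.stepM c (G.tr c prof n) (G.outcome prof (n + 1)) := by
  rw [outcome_succ]
  simp only [tr, outHist]
  rw [memM_append G c _ _ (G.outHist_ne _ _)]
  simp [outcome]

theorem tr_fst (c : Fin 2 → St V → V) (prof : Fin 2 → List V → V) (n : ℕ) :
    (G.tr c prof n).1 = (G.outcome prof n, fun i => ∃ k < n, G.outcome prof k ∈ G.goal i) := by
  induction n with
  | zero => simp [tr_zero, initM, outcome, outHist, lastV]
  | succ n ih =>
    rw [tr_succ]
    simp only [stepM, nx, ih]
    refine Prod.ext rfl ?_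
    funext i
    simp only [eq_iff_iff]
    constructor
    · rintro (⟨k, hk, h⟩ | h)
      · exact ⟨k, by omega, h⟩
      · exact ⟨n, by omega, h⟩
    · rintro ⟨k, hk, h⟩
      rcases Nat.lt_succ_iff_lt_or_eq.1 hk with h' | h'
      · exact Or.inl ⟨k, h', h⟩
      · subst h'; exact Or.inr h

/-- Discounted weight of a cost. -/
noncomputable def pw : ℕ∞ → ℝ
  | none => 0
  | some n => (1/2) ^ n

theorem pw_coe (n : ℕ) : pw (n : ℕ∞) = (1/2) ^ n := rfl
theorem pw_top : pw ⊤ = 0 := rfl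

theorem pw_nonneg (x : ℕ∞) : 0 ≤ pw x := by
  cases x with
  | top => simp [pw_top]
  | coe n => rw [pw_coe]; positivity

theorem pw_le_one (x : ℕ∞) : pw x ≤ 1 := by
  cases x with
  | top => simp [pw_top]
  | coe n => rw [pw_coe]; exact pow_le_one₀ (by norm_num) (by norm_num)

theorem pw_gap (n : ℕ) (x : ℕ∞) (h : (n : ℕ∞) < x) : pw x ≤ (1/2) ^ (n + 1) := by
  cases x with
  | top => rw [pw_top]; positivity
  | coe m =>
    rw [pw_coe]
    have : n < m := by exact_mod_cast h
    exact pow_le_pow_of_le_one (by norm_num) (by norm_num) this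

theorem pw_lt (x y : ℕ∞) (h : x < y) : pw y < pw x := by
  cases x with
  | top => simp at h
  | coe n =>
    have := pw_gap n y h
    rw [pw_coe]
    have h2 : (0:ℝ) < (1/2)^n := by positivity
    rw [pow_succ] at this
    linarith

open Classical in
/-- Indicator of a first visit to the goal of `i`. -/
noncomputable def ind (i : Fin 2) (s : St V) : ℝ := if s.1 ∈ G.goal i ∧ ¬ s.2 i then 1 else 0

theorem sum_ind_tendsto (c : Fin 2 → St V → V) (prof : Fin 2 → List V → V) (i : Fin 2) :
    Tendsto (fun n => ∑ k ∈ Finset.range n, (1/2 : ℝ)^k * G.ind i (G.tr c prof k).1) atTop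
      (𝓝 (pw (G.cost i (G.outcome prof)))) := by
  classical
  by_cases hex : ∃ l, G.outcome prof l ∈ G.goal i
  · have hl := Nat.find_spec hex
    have hmin : ∀ k, G.outcome prof k ∈ G.goal i → Nat.find hex ≤ k := fun k hk =>
      Nat.find_min' hex hk
    generalize Nat.find hex = l at hl hmin
    have hcost : G.cost i (G.outcome prof) = l := by
      apply le_antisymm
      · exact sInf_le ⟨l, rfl, hl⟩
      · apply le_sInf
        rintro _ ⟨k, rfl, hk⟩
        exact_mod_cast hmin k hk
    have hind : ∀ k, G.ind i (G.tr c prof k).1 = if k = l then 1 else 0 := by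
      intro k
      rw [tr_fst]
      simp only [ind]
      congr 1
      simp only [eq_iff_iff]
      constructor
      · rintro ⟨h1, h2⟩
        by_contra hne
        exact h2 ⟨l, lt_of_le_of_ne (hmin k h1) (Ne.symm hne), hl⟩
      · rintro rfl
        refine ⟨hl, ?_⟩
        rintro ⟨k', hk', h⟩
        exact absurd (hmin k' h) (by omega)
    rw [hcost, pw_coe]
    apply tendsto_const_nhds.congr'
    filter_upwards [eventually_gt_atTop l] with n hn
    simp [hind, hn]
  · push Not at hex
    have hcost : G.cost i (G.outcome prof) = ⊤ := by
      rw [cost, sInf_eq_top]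
      rintro _ ⟨k, rfl, hk⟩
      exact absurd hk (hex k)
    rw [hcost, pw_top]
    apply tendsto_const_nhds.congr
    intro n
    symm
    apply Finset.sum_eq_zero
    intro k _
    rw [tr_fst]
    simp [ind, hex]

/-- Reward of player `j`. -/
noncomputable def rew (A : ℝ) (j : Fin 2) (s : St V) : ℝ := A * G.ind j s - G.ind (1 - j) s

noncomputable def util (A : ℝ) (j : Fin 2) (ρ : ℕ → V) : ℝ :=
  A * pw (G.cost j ρ) - pw (G.cost (1 - j) ρ)

noncomputable def psum (A : ℝ) (j : Fin 2) (c : Fin 2 → St V → V) (prof : Fin 2 → List V → V)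
    (n : ℕ) : ℝ := ∑ k ∈ Finset.range n, (1/2 : ℝ)^k * G.rew A j (G.tr c prof k).1

theorem psum_tendsto (A : ℝ) (j : Fin 2) (c : Fin 2 → St V → V) (prof : Fin 2 → List V → V)
    (val : St V → ℝ) [Finite V] :
    Tendsto (fun n => G.psum A j c prof n + (1/2 : ℝ)^n * val (G.tr c prof n).1) atTop
      (𝓝 (G.util A j (G.outcome prof))) := by
  have h1 : Tendsto (fun n => G.psum A j c prof n) atTop (𝓝 (G.util A j (G.outcome prof))) := by
    have := ((G.sum_ind_tendsto c prof j).const_mul A).sub (G.sum_ind_tendsto c prof (1 - j))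
    refine this.congr fun n => ?_
    simp only [psum, rew]
    rw [Finset.mul_sum, ← Finset.sum_sub_distrib]
    exact Finset.sum_congr rfl fun k _ => by ring
  have h2 : Tendsto (fun n => (1/2 : ℝ)^n * val (G.tr c prof n).1) atTop (𝓝 0) := by
    obtain ⟨B, hB⟩ := (Set.finite_range fun s => |val s|).bddAbove
    have h3 : Tendsto (fun n => (1/2 : ℝ)^n * B) atTop (𝓝 0) := by
      simpa using (tendsto_pow_atTop_nhds_zero_of_lt_one (r := (1/2:ℝ)) (by norm_num)
        (by norm_num)).mul_const B
    refine squeeze_zero_norm (fun n => ?_) h3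
    rw [Real.norm_eq_abs, abs_mul, abs_of_nonneg (by positivity)]
    exact mul_le_mul_of_nonneg_left (hB ⟨_, rfl⟩) (by positivity)
  simpa using h1.add h2

theorem base_tr (c : Fin 2 → St V → V) (n : ℕ) : (G.tr c (G.profM c) n).2 = none ∧
    G.outcome (G.profM c) (n + 1) =
      c (G.owner (G.outcome (G.profM c) n)) (G.tr c (G.profM c) n).1 := by
  have aux : ∀ n, (G.tr c (G.profM c) n).2 = none → G.outcome (G.profM c) (n + 1) =
      c (G.owner (G.outcome (G.profM c) n)) (G.tr c (G.profM c) n).1 := by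
    intro n h
    rw [outcome_succ]
    show G.choiceM c (G.tr c (G.profM c) n) = _
    simp only [choiceM, h, Option.getD_none]
    rw [tr_fst]
  have h : ∀ n, (G.tr c (G.profM c) n).2 = none := by
    intro n
    induction n with
    | zero => simp [tr_zero, initM]
    | succ n ih =>
      rw [tr_succ, aux n ih]
      simp only [stepM, ih]
      rw [tr_fst]
      simp
  exact ⟨h n, aux n (h n)⟩

/-- For each weight there is a choice function whose profile is an equilibrium for the
discounted utilities. -/
theorem exists_disc [Finite V] (A : ℝ) : ∃ c : Fin 2 → St V → V, (∀ i s, G.E s.1 (c i s)) ∧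
    ∀ j σ', G.IsStrategy j σ' →
      G.util A j (G.outcome (Function.update (G.profM c) j σ')) ≤
        G.util A j (G.outcome (G.profM c)) := by
  have hd := fun j : Fin 2 => disc_value (fun s : St V => G.E s.1) (fun s => G.total s.1) G.nx
    (fun s => G.owner s.1 = j) (G.rew A j)
  choose val c hc using hd
  have hcE : ∀ i s, G.E s.1 (c i s) := fun i s => (hc i s).1
  refine ⟨c, hcE, fun j σ' hσ => ?_⟩
  have hp := G.isProfile_profM c hcE
  set p := G.profM c with hpdef
  set q := Function.update p j σ' with hq
  have hqp : G.IsProfile q := by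
    intro i
    by_cases hi : i = j
    · subst hi; simpa [hq] using hσ
    · rw [hq, Function.update_of_ne hi]; exact hp i
  have edge : ∀ (pr : Fin 2 → List V → V), G.IsProfile pr → ∀ n,
      G.E (G.tr c pr n).1.1 (G.outcome pr (n + 1)) := by
    intro pr hpr n
    rw [outcome_succ, tr_fst]
    exact hpr _ _ (G.outHist_isHistory pr hpr n) rfl
  have trs : ∀ (pr : Fin 2 → List V → V) n, (G.tr c pr (n+1)).1 =
      G.nx (G.tr c pr n).1 (G.outcome pr (n + 1)) := by
    intro pr n; rw [tr_succ]; rfl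
  have ps : ∀ (pr : Fin 2 → List V → V) n, G.psum A j c pr (n+1) =
      G.psum A j c pr n + (1/2 : ℝ)^n * G.rew A j (G.tr c pr n).1 := by
    intro pr n; simp only [psum]; rw [Finset.sum_range_succ]
  -- base play
  have hbase : ∀ n, G.psum A j c p n + (1/2 : ℝ)^n * val j (G.tr c p n).1 ≤
      G.util A j (G.outcome p) := by
    have hm : Monotone (fun n => G.psum A j c p n + (1/2 : ℝ)^n * val j (G.tr c p n).1) := by
      apply monotone_nat_of_le_succ
      intro n
      have hle : val j (G.tr c p n).1 ≤
          G.rew A j (G.tr c p n).1 + val j (G.tr c p (n+1)).1 / 2 := by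
        rw [trs]
        by_cases ho : G.owner (G.tr c p n).1.1 = j
        · have h1 := (G.base_tr c n).2
          rw [← hpdef] at h1
          have h2 : G.owner (G.outcome p n) = j := by
            rw [tr_fst] at ho; exact ho
          rw [h1, h2]
          exact (hc j _).2.1.le
        · exact (hc j _).2.2.2 ho _ (edge p hp n)
      simp only [ps]
      have h3 := mul_le_mul_of_nonneg_left hle (show (0:ℝ) ≤ (1/2)^n by positivity)
      rw [pow_succ]
      linarith
    exact fun n => hm.ge_of_tendsto (G.psum_tendsto A j c p (val j)) n
  -- deviating play
  have hdev : ∀ n, G.psum A j c q n + (1/2 : ℝ)^n * val j (G.tr c q n).1 ≤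
        G.util A j (G.outcome p) ∧
      ((G.tr c q n = G.tr c p n ∧ G.psum A j c q n = G.psum A j c p n) ∨
        (G.tr c q n).2 = some j) := by
    intro n
    induction n with
    | zero =>
      have h0 : G.tr c q 0 = G.tr c p 0 := by rw [tr_zero, tr_zero]
      have h1 : G.psum A j c q 0 = G.psum A j c p 0 := by simp [psum]
      refine ⟨?_, Or.inl ⟨h0, h1⟩⟩
      rw [h0, h1]; exact hbase 0
    | succ n ih =>
      obtain ⟨ih1, ih2⟩ := ih
      -- a useful consequence of an optimal step
      have good : G.rew A j (G.tr c q n).1 + val j (G.tr c q (n+1)).1 / 2 ≤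
          val j (G.tr c q n).1 → G.psum A j c q (n+1) + (1/2 : ℝ)^(n+1) *
          val j (G.tr c q (n+1)).1 ≤ G.util A j (G.outcome p) := by
        intro hle
        have h3 := mul_le_mul_of_nonneg_left hle (show (0:ℝ) ≤ (1/2)^n by positivity)
        rw [ps, pow_succ]
        linarith
      have hown : G.owner (G.tr c q n).1.1 = G.owner (G.outcome q n) := by rw [tr_fst]
      have hfollow : G.owner (G.tr c q n).1.1 ≠ j →
          G.outcome q (n+1) = G.choiceM c (G.tr c q n) := by
        intro ho
        rw [outcome_succ, ← hown, hq, Function.update_of_ne ho]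
        rfl
      have hj : G.owner (G.tr c q n).1.1 = j →
          G.rew A j (G.tr c q n).1 + val j (G.tr c q (n+1)).1 / 2 ≤
          val j (G.tr c q n).1 := by
        intro ho
        rw [trs]
        exact (hc j _).2.2.1 ho _ (edge q hqp n)
      rcases ih2 with ⟨e1, e2⟩ | hmode
      · have hb := G.base_tr c n
        rw [← hpdef] at hb
        have hnone : (G.tr c q n).2 = none := by rw [e1]; exact hb.1
        by_cases hw : G.outcome q (n+1) = G.outcome p (n+1)
        · have f1 : G.tr c q (n+1) = G.tr c p (n+1) := by
            rw [tr_succ, tr_succ, e1, hw]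
          have f2 : G.psum A j c q (n+1) = G.psum A j c p (n+1) := by
            rw [ps, ps, e1, e2]
          refine ⟨?_, Or.inl ⟨f1, f2⟩⟩
          rw [f1, f2]; exact hbase _
        · have hpo : G.outcome p (n+1) = c (G.owner (G.tr c q n).1.1) (G.tr c q n).1 := by
            rw [hb.2, e1]
            congr 2
            rw [tr_fst]
          have ho : G.owner (G.tr c q n).1.1 = j := by
            by_contra ho
            apply hw
            rw [hfollow ho, hpo]
            simp [choiceM, hnone]
          refine ⟨good (hj ho), Or.inr ?_⟩
          rw [tr_succ]
          rw [hpo] at hw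
          simp only [stepM, hnone, if_true]
          rw [if_neg hw, ho]
      · have hmode' : (G.tr c q (n+1)).2 = some j := by
          rw [tr_succ]; simp [stepM, hmode]
        refine ⟨good ?_, Or.inr hmode'⟩
        by_cases ho : G.owner (G.tr c q n).1.1 = j
        · exact hj ho
        · rw [trs, hfollow ho]
          simp only [choiceM, hmode, Option.getD_some]
          exact (hc j _).2.1.ge
  exact le_of_tendsto (G.psum_tendsto A j c q (val j)) (Eventually.of_forall fun n => (hdev n).1)

/-- `y` is a profitable deviation of `j` from `x` with deviation time bounded by `N`. -/
def bad (N : ℕ) (j : Fin 2) (ρ ρ' : ℕ → V) : Prop :=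
  (G.cost j ρ' < G.cost j ρ ∧ G.cost j ρ' ≤ N) ∨
    (G.cost j ρ = G.cost j ρ' ∧ G.cost (1 - j) ρ < G.cost (1 - j) ρ')

theorem not_bad (N : ℕ) (j : Fin 2) (ρ ρ' : ℕ → V)
    (h : G.util (2 ^ (N + 2)) j ρ' ≤ G.util (2 ^ (N + 2)) j ρ) : ¬ G.bad N j ρ ρ' := by
  simp only [util] at h
  rintro (⟨h1, h2⟩ | ⟨h1, h2⟩)
  · obtain ⟨n, hn⟩ := ENat.ne_top_iff_exists.1 (ne_top_of_le_ne_top (ENat.coe_ne_top N) h2)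
    rw [← hn] at h1 h2 h
    have hnN : n ≤ N := by exact_mod_cast h2
    have h3 := pw_gap n _ h1
    rw [pw_coe] at h
    have h4 : (2:ℝ)^(N+2) * (1/2)^(n+1) ≥ 2 := by
      obtain ⟨d, rfl⟩ := Nat.exists_eq_add_of_le hnN
      have : (2:ℝ)^(n+d+2) * (1/2)^(n+1) = 2 * 2^d := by
        have : (2:ℝ)^(n+d+2) = 2^(n+1) * (2 * 2^d) := by ring
        rw [this]
        have h5 : (2:ℝ)^(n+1) * (1/2)^(n+1) = 1 := by rw [← mul_pow]; norm_num
        linear_combination (2 * 2^d) * h5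
      rw [this]
      have : (1:ℝ) ≤ 2^d := one_le_pow₀ (by norm_num)
      linarith
    have h5 := mul_le_mul_of_nonneg_left h3 (show (0:ℝ) ≤ 2^(N+2) by positivity)
    have h6 : (2:ℝ)^(N+2) * (1/2)^n = 2 * (2^(N+2) * (1/2)^(n+1)) := by
      rw [pow_succ (1/2 : ℝ) n]; ring
    linarith [pw_nonneg (G.cost (1-j) ρ), pw_le_one (G.cost (1-j) ρ')]
  · rw [h1] at h
    linarith [pw_lt _ _ h2]

end ReachGame

/-- Every quantitative two-player reachability game has a
finite-memory secure equilibrium. -/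
theorem exists_finiteMemory_secure {V : Type} [Fintype V]
    (G : ReachGame (Fin 2) V) :
    ∃ prof : Fin 2 → List V → V,
      G.IsProfile prof ∧ G.FiniteMemoryProfile prof ∧ G.IsSecure prof := by
  classical
  -- pigeonhole over the finitely many choice functions
  have main : ∃ c : Fin 2 → ReachGame.St V → V, (∀ i s, G.E s.1 (c i s)) ∧
      ∀ N j σ', G.IsStrategy j σ' → ¬ G.bad N j (G.outcome (G.profM c))
        (G.outcome (Function.update (G.profM c) j σ')) := by
    by_contra hcon
    push Not at hcon
    have hN : ∀ c : Fin 2 → ReachGame.St V → V, ∃ N, (∀ i s, G.E s.1 (c i s)) →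
        ∃ j σ', G.IsStrategy j σ' ∧ G.bad N j (G.outcome (G.profM c))
        (G.outcome (Function.update (G.profM c) j σ')) := by
      intro c
      by_cases hE : ∀ i s, G.E s.1 (c i s)
      · obtain ⟨N, h⟩ := hcon c hE
        exact ⟨N, fun _ => h⟩
      · exact ⟨0, fun h => absurd h hE⟩
    choose N hN using hN
    obtain ⟨M, hM⟩ := (Set.finite_range N).bddAbove
    obtain ⟨c, hcE, hc⟩ := G.exists_disc (2 ^ (M + 2))
    obtain ⟨j, σ', hσ, hb⟩ := hN c hcE
    refine G.not_bad M j _ _ (hc j σ' hσ) ?_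
    rcases hb with ⟨h1, h2⟩ | h
    · exact Or.inl ⟨h1, h2.trans (by exact_mod_cast hM ⟨c, rfl⟩)⟩
    · exact Or.inr h
  obtain ⟨c, hcE, hc⟩ := main
  have hc' : ∀ j σ', G.IsStrategy j σ' → ∀ ρ', 
      G.outcome (Function.update (G.profM c) j σ') = ρ' →
      ¬ (G.cost j ρ' < G.cost j (G.outcome (G.profM c)) ∨
        (G.cost j (G.outcome (G.profM c)) = G.cost j ρ' ∧
          G.cost (1 - j) (G.outcome (G.profM c)) < G.cost (1 - j) ρ')) := by
    rintro j σ' hσ ρ' rfl (h | h)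
    · obtain ⟨n, hn⟩ := ENat.ne_top_iff_exists.1 (ne_top_of_lt h)
      exact hc n j σ' hσ (Or.inl ⟨h, hn.ge⟩)
    · exact hc 0 j σ' hσ (Or.inr h)
  refine ⟨G.profM c, G.isProfile_profM c hcE, fun i => G.finiteMemory_profM c i, ?_, ?_⟩
  · intro σ' hσ
    exact hc' 0 σ' hσ _ rfl
  · intro σ' hσ
    exact hc' 1 σ' hσ _ rfl
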